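/- Let F be a finite field with q elements, ψ : F → ℂ a nontrivial additive character, G = GL(n,F), B the upper triangular Borel, T the diagonal torus, and for b ∈ B let d(b) be its diagonal part. Let θ_1, …, θ_n : F^× → ℂ^× be multiplicative characters and let θ : T → ℂ^× be the character θ(diag(t_1,…,t_n)) = Π_i θ_i(t_i). Define the induced function J(θ)(g) = Σ_{x ∈ G, x⁻¹gx ∈ B} θ(d(x⁻¹gx)). Then for every g ∈ G: Σ_{h ∈ G} ψ(tr h)·J(θ)(h⁻¹g) = q^{n(n−1)/2} · (Π_{i=1}^{n} Σ_{y ∈ F^×} ψ(y)·θ_i(y)⁻¹) · J(θ)(g); that is, the induced function J(θ) is an eigenfunction of convolution with g ↦ ψ(tr g), with eigenvalue q^{n(n−1)/2} times a product of Gauss sums. (This is the function-theoretic content, for GL(n) and the standard representation, of Theorem 'main'(3): Φ_{G,ρ,ψ} ⋆ K_L ≅ H_{ρ,L,ψ,!} ⊗ K_L for the character sheaf K_L attached to a tame local system L on T.) -/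

import Mathlib

open scoped Classical in
/-- The induction of a function `f` on the diagonal torus `T` to a class function on
`G = GL(n,F)`: `J(f)(g) = Σ_{x ∈ G, x⁻¹gx ∈ B} f(d(x⁻¹gx))`. -/
noncomputable def indT {F : Type} [Field F] [Fintype F] [DecidableEq F] {n : ℕ}
    (f : (Fin n → F) → ℂ) (g : GL (Fin n) F) : ℂ :=
  ∑ x : GL (Fin n) F,
    if ∀ i j : Fin n, j < i → ((x⁻¹ * g * x : GL (Fin n) F) : Matrix (Fin n) (Fin n) F) i j = 0
    then f (fun i => ((x⁻¹ * g * x : GL (Fin n) F) : Matrix (Fin n) (Fin n) F) i i)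
    else 0

open scoped Classical in
/-- The extension by zero of a multiplicative character `θ : F^× → ℂ^×` to `F`. -/
noncomputable def extChar {F : Type} [Field F] [DecidableEq F] (θ : Fˣ →* ℂˣ) (a : F) : ℂ :=
  if ha : a = 0 then 0 else (θ (Units.mk0 a ha) : ℂ)

/-!
The function `h ↦ ψ (tr h)` is invariant under conjugation, so convolution with it commutes with
averaging over conjugates, and it suffices to treat the function `θ ∘ d` on `B`, extended by zero.
Substituting `h = A k` turns its convolution at `A` into the sum over upper triangular `k` of
`ψ (tr (A k)) θ(d(k))⁻¹`. Multiplicative characters vanish at non-units, so this is a Fourier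
transform over all matrices `k`, and it factors over the entries `k i j`: an entry below the
diagonal contributes `1`, a diagonal entry a Gauss sum times `θ_i(A i i)`, and an entry above the
diagonal `q` if `A j i = 0` and `0` otherwise. This gives the power of `q` and makes the sum vanish
unless `A` is upper triangular.
-/

section FiniteSums

variable {M G S : Type*}

lemma sum_units_eq_sum_of_forall_not_isUnit [Monoid M] [Fintype M] [Fintype Mˣ]
    [AddCommMonoid S] {f : M → S} (hf : ∀ a, ¬IsUnit a → f a = 0) :
    ∑ u : Mˣ, f u = ∑ a, f a :=
  Fintype.sum_of_injective Units.val Units.val_injective _ f hf fun _ ↦ rfl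

lemma sum_matrix_prod_prod {m n : Type*} [Fintype m] [Fintype n] [DecidableEq m] [DecidableEq n]
    [Fintype M] [CommSemiring S] (φ : m → n → M → S) :
    ∑ X : Matrix m n M, ∏ i, ∏ j, φ i j (X i j) = ∏ i, ∏ j, ∑ a, φ i j a := by
  simp_rw [Fintype.prod_sum]
  rfl

lemma sum_conj_eigenfunction [Group G] [Fintype G] [NonUnitalNonAssocSemiring S]
    {f β : G → S} {c : S} (hf : ∀ x h, f (x * h * x⁻¹) = f h)
    (hβ : ∀ a, ∑ h, f h * β (h⁻¹ * a) = c * β a) (g : G) :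
    ∑ h, f h * ∑ x, β (x⁻¹ * (h⁻¹ * g) * x) = c * ∑ x, β (x⁻¹ * g * x) := by
  simp_rw [Finset.mul_sum]
  rw [Finset.sum_comm]
  refine Finset.sum_congr rfl fun x _ ↦ ?_
  calc ∑ h, f h * β (x⁻¹ * (h⁻¹ * g) * x)
      = ∑ h, f (x * h * x⁻¹) * β (x⁻¹ * ((x * h * x⁻¹)⁻¹ * g) * x) :=
        ((MulAut.conj x).toEquiv.sum_comp fun h ↦ f h * β (x⁻¹ * (h⁻¹ * g) * x)).symm
    _ = ∑ h, f h * β (h⁻¹ * (x⁻¹ * g * x)) := by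
        simp_rw [hf]
        congr! 3
        group
    _ = c * β (x⁻¹ * g * x) := hβ _

lemma prod_prod_ite_lt {m : Type*} [Fintype m] [LinearOrder m] [CommMonoid S] (q : S) :
    ∏ i : m, ∏ j : m, (if i < j then q else 1) = q ^ (Fintype.card m).choose 2 := by
  rw [← Fintype.prod_prod_type', Finset.prod_ite, Finset.prod_const, Finset.prod_const_one,
    mul_one, Fintype.card_product_filter_lt]

lemma addChar_map_sum {ι A : Type*} [AddCommMonoid A] [CommMonoid S] (ψ : AddChar A S)
    (s : Finset ι) (f : ι → A) : ψ (∑ i ∈ s, f i) = ∏ i ∈ s, ψ (f i) := by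
  simpa [← ofAdd_sum] using map_prod ψ.toMonoidHom (fun i ↦ Multiplicative.ofAdd (f i)) s

lemma addChar_trace_mul {m n A : Type*} [Fintype m] [Fintype n] [NonUnitalNonAssocSemiring A]
    [CommMonoid S] (ψ : AddChar A S) (X : Matrix n m A) (Y : Matrix m n A) :
    ψ (X * Y).trace = ∏ i, ∏ j, ψ (X j i * Y i j) := by
  simp_rw [Matrix.trace, Matrix.diag_apply, Matrix.mul_apply, addChar_map_sum]
  exact Finset.prod_comm

end FiniteSums

section Triangular

variable {m R : Type*} [Fintype m] [LinearOrder m]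

lemma mul_diag_of_isUpperTriangular [NonUnitalNonAssocSemiring R] {A B : Matrix m m R}
    (hA : A.IsUpperTriangular) (hB : B.IsUpperTriangular) (i : m) :
    (A * B) i i = A i i * B i i := by
  rw [Matrix.mul_apply]
  refine Finset.sum_eq_single i (fun j _ hj ↦ ?_) (by simp)
  rcases hj.lt_or_gt with hji | hij
  · rw [hA hji, zero_mul]
  · rw [hB hij, mul_zero]

variable [CommRing R]

lemma isUnit_diag_of_isUpperTriangular {A : GL m R} (hA : A.val.IsUpperTriangular) (i : m) :
    IsUnit (A.val i i) := by
  have hdet : IsUnit A.val.det := Matrix.isUnits_det_units A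
  rw [Matrix.det_of_isUpperTriangular hA, IsUnit.prod_univ_iff] at hdet
  exact hdet i

lemma isUpperTriangular_inv {A : GL m R} (hA : A.val.IsUpperTriangular) :
    (A⁻¹).val.IsUpperTriangular := by
  have := A.invertible
  rw [Matrix.coe_units_inv]
  exact Matrix.blockTriangular_inv_of_blockTriangular hA

lemma isUpperTriangular_inv_iff {A : GL m R} :
    (A⁻¹).val.IsUpperTriangular ↔ A.val.IsUpperTriangular :=
  ⟨fun h ↦ inv_inv A ▸ isUpperTriangular_inv h, isUpperTriangular_inv⟩

lemma inverse_diag_of_isUpperTriangular {A : GL m R} (hA : A.val.IsUpperTriangular) (i : m) :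
    Ring.inverse (A.val i i) = (A⁻¹).val i i := by
  have hdiag : A.val i i * (A⁻¹).val i i = 1 := by
    rw [← mul_diag_of_isUpperTriangular hA (isUpperTriangular_inv hA), Units.mul_inv,
      Matrix.one_apply_eq]
  rw [← mul_one (Ring.inverse _), ← hdiag,
    Ring.inverse_mul_cancel_left _ _ (isUnit_diag_of_isUpperTriangular hA i)]

end Triangular

section BorelChar

variable {m R R' : Type*} [LinearOrder m] [CommRing R] [CommRing R']

open scoped Classical in
/-- The factor contributed by the entry `M i j = a` to the value at the matrix `M` of the character
`⊗ᵢ χ i` of the upper triangular Borel subgroup, see `borelChar`. -/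
noncomputable def borelFactor (χ : m → MulChar R R') (i j : m) (a : R) : R' :=
  if i = j then χ i a else if j < i then if a = 0 then 1 else 0 else 1

-- The Fourier transform exchanges the point mass below the diagonal with the constant above it,
-- hence `borelFactor χ⁻¹ j i` with `i` and `j` swapped.
lemma sum_addChar_mul_borelFactor [Fintype R] [IsDomain R'] {ψ : AddChar R R'}
    (hψ : ψ.IsPrimitive) (χ : m → MulChar R R') {i j : m} {b : R} (hb : i = j → IsUnit b) :
    ∑ a, ψ (b * a) * borelFactor χ i j a =
      (if i < j then (Fintype.card R : R') else 1) * (if i = j then gaussSum (χ i) ψ else 1) *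
        borelFactor χ⁻¹ j i b := by
  classical
  rcases lt_trichotomy i j with hij | rfl | hji
  · simpa [borelFactor, hij, hij.ne, hij.ne', hij.not_gt, mul_comm b]
      using AddChar.sum_mulShift b hψ
  · obtain ⟨u, rfl⟩ := hb rfl
    simpa [borelFactor, gaussSum, mul_comm] using gaussSum_mulShift_eq (χ i) ψ u
  · simp [borelFactor, hji, hji.ne, hji.ne', hji.not_gt]

variable [Fintype m]

open scoped Classical in
/-- The character `⊗ᵢ χ i` of the diagonal torus, inflated to the upper triangular Borel subgroup
and extended by zero to all matrices. No invertibility condition is imposed, since multiplicative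
characters vanish at non-units. -/
noncomputable def borelChar (χ : m → MulChar R R') (M : Matrix m m R) : R' :=
  if M.IsUpperTriangular then ∏ i, χ i (M i i) else 0

lemma borelChar_eq_prod_borelFactor (χ : m → MulChar R R') (M : Matrix m m R) :
    borelChar χ M = ∏ i, ∏ j, borelFactor χ i j (M i j) := by
  rw [borelChar]
  split_ifs with hM
  · refine Finset.prod_congr rfl fun i _ ↦ ?_
    rw [Finset.prod_eq_single i (fun j _ hj ↦ ?_) (by simp), borelFactor, if_pos rfl]
    by_cases hji : j < i
    · simp [borelFactor, hj.symm, hM hji]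
    · simp [borelFactor, hj.symm, hji]
  · simp only [Matrix.BlockTriangular, not_forall, id] at hM
    obtain ⟨i, j, hji, hne⟩ := hM
    refine (Finset.prod_eq_zero (Finset.mem_univ i)
      (Finset.prod_eq_zero (Finset.mem_univ j) ?_)).symm
    simp [borelFactor, hji, hji.ne', hne]

lemma borelChar_of_not_isUnit (χ : m → MulChar R R') {M : Matrix m m R} (hM : ¬IsUnit M) :
    borelChar χ M = 0 := by
  rw [borelChar]
  split_ifs with htri
  · rw [Matrix.isUnit_iff_isUnit_det, Matrix.det_of_isUpperTriangular htri,
      IsUnit.prod_univ_iff, not_forall] at hM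
    obtain ⟨i, hi⟩ := hM
    exact Finset.prod_eq_zero (Finset.mem_univ i) ((χ i).map_nonunit hi)
  · rfl

lemma borelChar_inv (χ : m → MulChar R R') (A : GL m R) :
    borelChar χ (A⁻¹).val = borelChar χ⁻¹ A.val := by
  by_cases hA : A.val.IsUpperTriangular
  · rw [borelChar, borelChar, if_pos (isUpperTriangular_inv hA), if_pos hA]
    simp_rw [Pi.inv_apply, MulChar.inv_apply, inverse_diag_of_isUpperTriangular hA]
  · rw [borelChar, borelChar, if_neg (isUpperTriangular_inv_iff.not.2 hA), if_neg hA]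

section FourierTransform

variable [Fintype R] [IsDomain R'] {ψ : AddChar R R'}

theorem sum_addChar_trace_mul_borelChar (hψ : ψ.IsPrimitive) (χ : m → MulChar R R') (A : GL m R) :
    ∑ M : Matrix m m R, ψ (A.val * M).trace * borelChar χ M =
      (Fintype.card R : R') ^ (Fintype.card m).choose 2 * (∏ i, gaussSum (χ i) ψ) *
        borelChar χ⁻¹ A.val := by
  simp_rw [addChar_trace_mul, borelChar_eq_prod_borelFactor χ, ← Finset.prod_mul_distrib]
  rw [sum_matrix_prod_prod fun i j a ↦ ψ (A.val j i * a) * borelFactor χ i j a]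
  by_cases hA : A.val.IsUpperTriangular
  · have hdiag (i j : m) (h : i = j) : IsUnit (A.val j i) :=
      h ▸ isUnit_diag_of_isUpperTriangular hA i
    simp_rw [sum_addChar_mul_borelFactor hψ χ (hdiag _ _), Finset.prod_mul_distrib]
    rw [prod_prod_ite_lt, borelChar_eq_prod_borelFactor,
      Finset.prod_comm (f := fun i j ↦ borelFactor χ⁻¹ j i (A.val j i))]
    simp
  · rw [borelChar, if_neg hA, mul_zero]
    simp only [Matrix.BlockTriangular, not_forall, id] at hA
    obtain ⟨j, i, hij, hne⟩ := hA
    refine Finset.prod_eq_zero (Finset.mem_univ i) (Finset.prod_eq_zero (Finset.mem_univ j) ?_)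
    rw [sum_addChar_mul_borelFactor hψ χ fun h ↦ absurd h hij.ne]
    simp [borelFactor, hij, hij.ne', hne]

variable [DecidableEq R]

theorem borelChar_eigenfunction (hψ : ψ.IsPrimitive) (χ : m → MulChar R R') (A : GL m R) :
    ∑ h : GL m R, ψ h.val.trace * borelChar χ (h⁻¹ * A).val =
      (Fintype.card R : R') ^ (Fintype.card m).choose 2 * (∏ i, gaussSum (χ i)⁻¹ ψ) *
        borelChar χ A.val := by
  calc ∑ h : GL m R, ψ h.val.trace * borelChar χ (h⁻¹ * A).val
      = ∑ k : GL m R, ψ (A * k).val.trace * borelChar χ ((A * k)⁻¹ * A).val :=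
        (Equiv.sum_comp (Equiv.mulLeft A) fun h ↦ ψ h.val.trace * borelChar χ (h⁻¹ * A).val).symm
    _ = ∑ k : GL m R, ψ (A.val * k.val).trace * borelChar χ⁻¹ k.val := by
        simp_rw [mul_inv_rev, inv_mul_cancel_right, borelChar_inv, Units.val_mul]
    _ = ∑ M : Matrix m m R, ψ (A.val * M).trace * borelChar χ⁻¹ M :=
        sum_units_eq_sum_of_forall_not_isUnit
          (f := fun M : Matrix m m R ↦ ψ (A.val * M).trace * borelChar χ⁻¹ M)
          fun M hM ↦ by rw [borelChar_of_not_isUnit χ⁻¹ hM, mul_zero]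
    _ = _ := by
        simp only [sum_addChar_trace_mul_borelChar hψ, inv_inv, Pi.inv_apply]

/-- The function on `GL m R` induced from `borelChar χ`. As in `indT`, the sum is over all `x` and
not over cosets of the Borel subgroup, so it is the induced character times the order of that
subgroup. -/
noncomputable def inducedBorelChar (χ : m → MulChar R R') (g : GL m R) : R' :=
  ∑ x : GL m R, borelChar χ (x⁻¹ * g * x).val

theorem ind_char_eigenfunction_general (hψ : ψ.IsPrimitive) (χ : m → MulChar R R') (g : GL m R) :
    ∑ h : GL m R, ψ h.val.trace * inducedBorelChar χ (h⁻¹ * g) =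
      (Fintype.card R : R') ^ (Fintype.card m).choose 2 * (∏ i, gaussSum (χ i)⁻¹ ψ) *
        inducedBorelChar χ g :=
  sum_conj_eigenfunction (f := fun h : GL m R ↦ ψ h.val.trace) (β := fun h ↦ borelChar χ h.val)
    (fun x h ↦ congrArg ψ (Matrix.trace_units_conj x h.val)) (borelChar_eigenfunction hψ χ) g

end FourierTransform

end BorelChar

lemma gaussSum_eq_sum_units {R R' : Type*} [CommRing R] [Fintype R] [DecidableEq R] [CommRing R']
    (χ : MulChar R R') (ψ : AddChar R R') : gaussSum χ ψ = ∑ u : Rˣ, χ u * ψ u :=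
  (sum_units_eq_sum_of_forall_not_isUnit (f := fun a ↦ χ a * ψ a)
    fun _ ha ↦ by rw [χ.map_nonunit ha, zero_mul]).symm

lemma gaussSum_inv_ofUnitHom {R K : Type*} [CommRing R] [Fintype R] [DecidableEq R] [Field K]
    (θ : Rˣ →* Kˣ) (ψ : AddChar R K) :
    gaussSum (MulChar.ofUnitHom θ)⁻¹ ψ = ∑ y : Rˣ, ψ (y : R) * (θ y : K)⁻¹ := by
  simp [gaussSum_eq_sum_units, MulChar.inv_apply_eq_inv', mul_comm]

lemma extChar_eq_ofUnitHom {F : Type} [Field F] [DecidableEq F] (θ : Fˣ →* ℂˣ) (a : F) :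
    extChar θ a = MulChar.ofUnitHom θ a := by
  by_cases ha : a = 0
  · rw [extChar, dif_pos ha, ha, MulChar.map_zero]
  · rw [extChar, dif_neg ha, ← MulChar.ofUnitHom_coe, Units.val_mk0]

lemma indT_prod_extChar {F : Type} [Field F] [Fintype F] [DecidableEq F] {n : ℕ}
    (θ : Fin n → (Fˣ →* ℂˣ)) (g : GL (Fin n) F) :
    indT (fun t ↦ ∏ i, extChar (θ i) (t i)) g =
      inducedBorelChar (fun i ↦ MulChar.ofUnitHom (θ i)) g := by
  simp only [indT, inducedBorelChar, borelChar, extChar_eq_ofUnitHom]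
  congr!

/-- the induced function `J(θ)` attached to a character
`θ = θ_1 ⊗ ⋯ ⊗ θ_n` of the diagonal torus is an eigenfunction of convolution with
`g ↦ ψ(tr g)`, with eigenvalue `q^{n(n-1)/2} · Π_i Σ_{y ∈ F^×} ψ(y)θ_i(y)⁻¹`,
a power of `q` times a product of Gauss sums. -/
theorem ind_char_eigenfunction {F : Type} [Field F] [Fintype F] [DecidableEq F]
    (ψ : AddChar F ℂ) (hψ : ψ ≠ 1) {n : ℕ} (θ : Fin n → (Fˣ →* ℂˣ)) (g : GL (Fin n) F) :
    ∑ h : GL (Fin n) F, ψ ((h : Matrix (Fin n) (Fin n) F).trace) *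
        indT (fun t => ∏ i, extChar (θ i) (t i)) (h⁻¹ * g)
      = (Fintype.card F : ℂ) ^ (n * (n - 1) / 2) *
          (∏ i, ∑ y : Fˣ, ψ (y : F) * ((θ i y)⁻¹ : ℂ)) *
          indT (fun t => ∏ i, extChar (θ i) (t i)) g := by
  simp_rw [indT_prod_extChar, ← gaussSum_inv_ofUnitHom]
  simpa [Nat.choose_two_right] using ind_char_eigenfunction_general (.of_ne_one hψ) _ g
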